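/- Assume in addition that P satisfies the Jacobi identity P(f,P(g,h)) + P(g,P(h,f)) + P(h,P(f,g)) = 0 for all f,g,h ∈ R, and that each P(x_i,x_j) has zero constant term. Let r denote the rank, over the field of fractions ℂ(x₁,…,x_n), of the n×n antisymmetric matrix (L_{ij}) (so r is even). Let φ₁,…,φ_n ∈ R be nonzero polynomials such that for all i,j there exist λ_{ij} ∈ ℂ with P(φ_i,φ_j) = λ_{ij}·φ_i·φ_j, and such that D = det((∂φ_i/∂x_j)_{i,j}) is nonzero. If 2·(n + ord(D) − Σ_{i=1}^n ord(φ_i)) = r (Property I), then: (i) P₀(φ_i^low, φ_j^low) = 0 for all i,j; and (ii) there exists a subset S ⊆ {1,…,n} with |S| = n − r/2 such that the family (φ_i^low)_{i∈S} is algebraically independent over ℂ. In other words, {φ₁^low,…,φ_n^low} contains a polynomial integrable system for the linearized Poisson bracket P₀. -/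

import Mathlib

/-!
The dilation `f(x) ↦ f(t x)` (`dilate`) turns orders into orders of vanishing in `t`: the coefficient
of `t ^ d` in `f(t x)` is the degree `d` component of `f`, and the `x_j`-derivative of `φᵢ(t x)` is
`t ^ ord φᵢ` times a polynomial `B i j` in `t` whose value at `t = 0` is `∂ⱼ φᵢ^low`
(`exists_dilate_pderiv`).

Commutation. Expand `P(φᵢ, φⱼ)` by the biderivation formula (`bracket_eq_sum`) and dilate. As the
structure functions `P(x_a, x_b)` have no constant term, the `t`-leading part of the left side of
`P(φᵢ, φⱼ) = λᵢⱼ φᵢ φⱼ` is `P₀(φᵢ^low, φⱼ^low)`, placed in degree `ord φᵢ + ord φⱼ - 1`; the right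
side has order at least `ord φᵢ + ord φⱼ`, so this part vanishes.

Independence. Let `s` be the rank of the Jacobian matrix of the lowest degree terms. Dilating the
Jacobian determinant gives `t ^ n D(t x) = t ^ (∑ ord φᵢ) det B`, and `B` has rank `s` at `t = 0`, so
`t ^ (n - s)` divides `det B` (`X_pow_dvd_det`). Comparing orders in `t` yields
`∑ ord φᵢ + (n - s) ≤ n + ord D` (`sum_mvOrd_add_corank_le`), which together with Property I says
`s ≥ n - r / 2`. Choosing `n - r / 2` independent rows of the Jacobian matrix and applying the
Jacobian criterion (`algebraicIndependent_of_gradients`) gives the subfamily.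
-/

open MvPolynomial

/-- The order of a polynomial: the minimal total degree of a nonzero
homogeneous component. -/
noncomputable def mvOrd {σ : Type*} (f : MvPolynomial σ ℂ) : ℕ :=
  sInf {d : ℕ | MvPolynomial.homogeneousComponent d f ≠ 0}

/-- The lowest degree term of a polynomial: its nonzero homogeneous component
of minimal total degree. -/
noncomputable def mvLow {σ : Type*} (f : MvPolynomial σ ℂ) : MvPolynomial σ ℂ :=
  MvPolynomial.homogeneousComponent (mvOrd f) f

/-! ### Determinants over `K[t]` -/

open Polynomial in
/-- Over the polynomial ring `K[t]`, a square matrix whose reduction modulo `t` has corank `k`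
has determinant divisible by `t ^ k`: constant row and column operations of determinant one
diagonalize the reduction, after which `k` rows are divisible by `t`. -/
lemma X_pow_dvd_det {K : Type*} [Field K] {n : ℕ} (A : Matrix (Fin n) (Fin n) K[X]) :
    (Polynomial.X : K[X]) ^ (n - (A.map (Polynomial.coeff · 0)).rank) ∣ A.det := by
  classical
  obtain ⟨L, L', D, h⟩ :=
    Matrix.Pivot.exists_list_transvec_mul_mul_list_transvec_eq_diagonal
      (A.map (Polynomial.coeff · 0))
  set U := (L.map Matrix.TransvectionStruct.toMatrix).prod with hU
  set V := (L'.map Matrix.TransvectionStruct.toMatrix).prod with hV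
  have hUd : U.det = 1 := Matrix.TransvectionStruct.det_toMatrix_prod L
  have hVd : V.det = 1 := Matrix.TransvectionStruct.det_toMatrix_prod L'
  have hrank : (A.map (Polynomial.coeff · 0)).rank = Fintype.card {i // D i ≠ 0} := by
    rw [← Matrix.rank_diagonal, ← h, Matrix.rank_mul_eq_left_of_isUnit_det _ _ (by simp [hVd]),
      Matrix.rank_mul_eq_right_of_isUnit_det _ _ (by simp [hUd])]
  set B := U.map (Polynomial.C) * A * V.map (Polynomial.C) with hB
  have hdet : B.det = A.det := by
    have h1 : (U.map (Polynomial.C : K →+* K[X])).det = 1 := by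
      have := (Polynomial.C : K →+* K[X]).map_det U
      rw [RingHom.mapMatrix_apply] at this
      rw [← this, hUd, map_one]
    have h2 : (V.map (Polynomial.C : K →+* K[X])).det = 1 := by
      have := (Polynomial.C : K →+* K[X]).map_det V
      rw [RingHom.mapMatrix_apply] at this
      rw [← this, hVd, map_one]
    rw [hB, Matrix.det_mul, Matrix.det_mul, h1, h2, one_mul, mul_one]
  have hB0 : ∀ i j, (B i j).coeff 0 = Matrix.diagonal D i j := by
    intro i j
    rw [← h, hB]
    simp [Matrix.mul_apply, Polynomial.finsetSum_coeff, Polynomial.mul_coeff_zero]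
  -- the rows of `B` at which the diagonal vanishes are divisible by the variable
  have hrow : ∀ i j, ∃ q, B i j = (if D i = 0 then Polynomial.X else 1) * q := by
    intro i j
    split_ifs with hi
    · have : Polynomial.X ∣ B i j := by
        rw [Polynomial.X_dvd_iff, hB0, Matrix.diagonal_apply]
        split_ifs <;> simp [hi]
      exact this
    · exact ⟨B i j, by simp⟩
  choose Q hQ using hrow
  have hBQ : B = Matrix.of fun i j => (if D i = 0 then (Polynomial.X : K[X]) else 1) * Q i j := by
    ext1 i j
    exact hQ i j
  rw [← hdet, hBQ]
  have := Matrix.det_mul_column (fun i => if D i = 0 then (Polynomial.X : K[X]) else 1)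
    (Matrix.of Q)
  simp only [Matrix.of_apply] at this
  rw [this]
  refine Dvd.dvd.mul_right ?_ _
  rw [Finset.prod_ite, Finset.prod_const, Finset.prod_const_one, mul_one, hrank]
  refine pow_dvd_pow _ ?_
  have h1 := Finset.card_filter_add_card_filter_not (s := (Finset.univ : Finset (Fin n)))
    (fun i => D i = 0)
  rw [Fintype.card_subtype]
  simp only [Finset.card_univ, Fintype.card_fin] at h1
  simp only [ne_eq]
  omega

/-! ### The Jacobian criterion -/

/-- The chain rule for partial derivatives of a polynomial in polynomials. -/
lemma pderiv_aeval_eq {σ ι : Type*} [Fintype ι] (g : ι → MvPolynomial σ ℂ) (j : σ)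
    (F : MvPolynomial ι ℂ) :
    pderiv j (aeval g F) = ∑ i, aeval g (pderiv i F) * pderiv j (g i) := by
  classical
  induction F using MvPolynomial.induction_on with
  | C a => simp
  | add p q hp hq => simp only [map_add, hp, hq, add_mul, Finset.sum_add_distrib]
  | mul_X p k hp =>
    simp only [map_mul, aeval_X, Derivation.leibniz, smul_eq_mul, hp, map_add, add_mul,
      Finset.sum_add_distrib, pderiv_X]
    congr 1
    · rw [Finset.sum_eq_single k]
      · simp
      · intro b _ hb
        simp [hb.symm]
      · simp
    · rw [Finset.mul_sum]
      exact Finset.sum_congr rfl fun i _ => by ring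

/-- Jacobian criterion in characteristic zero: polynomials whose gradients are linearly independent
over the field of rational functions are algebraically independent. A relation of minimal degree
would yield, by differentiation, a nontrivial linear relation among the gradients. -/
lemma algebraicIndependent_of_gradients {σ ι K : Type*} [Fintype ι] [Field K]
    [Algebra (MvPolynomial σ ℂ) K] [IsFractionRing (MvPolynomial σ ℂ) K]
    (g : ι → MvPolynomial σ ℂ)
    (h : LinearIndependent K
      (fun i (j : σ) => algebraMap (MvPolynomial σ ℂ) K (pderiv j (g i)))) :
    AlgebraicIndependent ℂ g := by
  classical
  rw [algebraicIndependent_iff]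
  suffices H : ∀ (N : ℕ) (F : MvPolynomial ι ℂ), (∀ m, coeff m F ≠ 0 → m.degree < N) →
      aeval g F = 0 → F = 0 by
    intro F hF
    refine H (F.totalDegree + 1) F (fun m hm => ?_) hF
    have := le_totalDegree (mem_support_iff.mpr hm)
    exact Nat.lt_succ_of_le this
  intro N
  induction N with
  | zero =>
    intro F hF _
    ext m
    by_contra hm
    exact absurd (hF m hm) (Nat.not_lt_zero _)
  | succ N ih =>
    intro F hF h0
    have hd : ∀ i, pderiv i F = 0 := by
      intro i
      refine ih _ (fun m hm => ?_) ?_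
      · rw [coeff_pderiv] at hm
        have := hF _ (left_ne_zero_of_mul hm)
        rw [map_add, Finsupp.degree_single] at this
        omega
      · rw [Fintype.linearIndependent_iff] at h
        have h1 := h (fun i => algebraMap _ K (aeval g (pderiv i F))) (by
          ext j
          have h2 := congrArg (algebraMap (MvPolynomial σ ℂ) K) (pderiv_aeval_eq g j F)
          rw [h0, map_zero, map_zero, map_sum] at h2
          rw [Finset.sum_apply, Pi.zero_apply, h2]
          exact Finset.sum_congr rfl fun i _ => (map_mul _ _ _).symm) i
        exact (IsFractionRing.injective (MvPolynomial σ ℂ) K) (by rw [h1, map_zero])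
    have hC : F = C (coeff 0 F) := by
      ext m
      rw [coeff_C]
      split_ifs with hm
      · rw [hm]
      · obtain ⟨i, hi⟩ : ∃ i, m i ≠ 0 := by
          by_contra! hcon
          exact hm (Finsupp.ext fun i => (hcon i).symm)
        have hle : Finsupp.single i 1 ≤ m := by
          rw [Finsupp.single_le_iff]
          omega
        have h2 := coeff_pderiv (i := i) F (m - Finsupp.single i 1)
        rw [hd i, coeff_zero, tsub_add_cancel_of_le hle] at h2
        exact (mul_eq_zero.mp h2.symm).resolve_right (Nat.cast_add_one_ne_zero _)
    rw [hC] at h0 ⊢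
    rw [aeval_C, MvPolynomial.algebraMap_eq, C_eq_zero] at h0
    rw [h0, C_0]

/-! ### Dilation and lowest degree terms -/

/-- The dilation `f(x) ↦ f(t x)`, as a homomorphism to polynomials in `t` with coefficients in
`ℂ[x]`. The coefficient of `t ^ d` is the degree `d` homogeneous component. -/
noncomputable def dilate {σ : Type*} : MvPolynomial σ ℂ →ₐ[ℂ] Polynomial (MvPolynomial σ ℂ) :=
  aeval fun i => Polynomial.C (X i) * Polynomial.X

lemma coeff_dilate {σ : Type*} (f : MvPolynomial σ ℂ) (d : ℕ) :
    (dilate f).coeff d = homogeneousComponent d f := by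
  classical
  induction f using MvPolynomial.induction_on' with
  | monomial s a =>
    have : dilate (monomial s a) =
        Polynomial.C (monomial s a) * (Polynomial.X : Polynomial (MvPolynomial σ ℂ)) ^ s.degree := by
      rw [dilate, aeval_monomial, monomial_eq (s := s) (a := a), map_mul, mul_assoc]
      congr 1
      simp only [mul_pow, Finsupp.prod, Finset.prod_mul_distrib, map_prod, map_pow,
        Finset.prod_pow_eq_pow_sum]
      rfl
    rw [this, Polynomial.coeff_C_mul_X_pow,
      homogeneousComponent_of_mem (isHomogeneous_monomial a rfl)]
  | add p q hp hq => rw [map_add, Polynomial.coeff_add, hp, hq, map_add]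

lemma homogeneousComponent_pderiv {σ : Type*} (f : MvPolynomial σ ℂ) (j : σ) (d : ℕ) :
    homogeneousComponent d (pderiv j f) = pderiv j (homogeneousComponent (d + 1) f) := by
  ext m
  simp only [coeff_homogeneousComponent, coeff_pderiv, map_add, Finsupp.degree_single]
  by_cases h : m.degree = d <;> simp [h]

lemma homogeneousComponent_eq_zero_of_lt_mvOrd {σ : Type*} {f : MvPolynomial σ ℂ} {d : ℕ}
    (h : d < mvOrd f) : homogeneousComponent d f = 0 := by
  by_contra hne
  exact Nat.notMem_of_lt_sInf h hne

lemma mvLow_ne_zero {σ : Type*} {f : MvPolynomial σ ℂ} (hf : f ≠ 0) : mvLow f ≠ 0 := by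
  refine Nat.sInf_mem (s := {d : ℕ | homogeneousComponent d f ≠ 0}) ?_
  by_contra hne
  rw [Set.not_nonempty_iff_eq_empty, Set.eq_empty_iff_forall_notMem] at hne
  apply hf
  rw [← sum_homogeneousComponent f]
  exact Finset.sum_eq_zero fun d _ => not_not.mp (hne d)

lemma X_pow_mvOrd_dvd_dilate {σ : Type*} (f : MvPolynomial σ ℂ) :
    Polynomial.X ^ mvOrd f ∣ dilate f := by
  rw [Polynomial.X_pow_dvd_iff]
  intro d hd
  rw [coeff_dilate, homogeneousComponent_eq_zero_of_lt_mvOrd hd]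

/-- The partial derivatives of `f(t x)`, divided by `t ^ ord f`, specialize at `t = 0` to the
partial derivatives of the lowest degree term. -/
lemma exists_dilate_pderiv {σ : Type*} (f : MvPolynomial σ ℂ) (j : σ) :
    ∃ B : Polynomial (MvPolynomial σ ℂ),
      Polynomial.X * dilate (pderiv j f) = Polynomial.X ^ mvOrd f * B ∧
      B.coeff 0 = pderiv j (mvLow f) := by
  have key : ∀ d, (Polynomial.X * dilate (pderiv j f)).coeff d =
      pderiv j (homogeneousComponent d f) := by
    rintro (_ | d)
    · simp
    · rw [Polynomial.coeff_X_mul, coeff_dilate, homogeneousComponent_pderiv]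
  have hdvd : Polynomial.X ^ mvOrd f ∣ Polynomial.X * dilate (pderiv j f) := by
    rw [Polynomial.X_pow_dvd_iff]
    intro d hd
    rw [key, homogeneousComponent_eq_zero_of_lt_mvOrd hd, map_zero]
  obtain ⟨B, hB⟩ := hdvd
  refine ⟨B, hB, ?_⟩
  rw [mvLow, ← key, hB, mul_comm]
  simpa using (Polynomial.coeff_mul_X_pow B (mvOrd f) 0).symm

/-! ### Biderivations -/

/-- An antisymmetric biderivation of a polynomial ring is determined by its values on the
variables. -/
lemma bracket_eq_sum {n : ℕ}
    (P : MvPolynomial (Fin n) ℂ → MvPolynomial (Fin n) ℂ → MvPolynomial (Fin n) ℂ)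
    (hadd : ∀ a b c, P (a + b) c = P a c + P b c)
    (hsmul : ∀ (r : ℂ) (a b), P (r • a) b = r • P a b)
    (hskew : ∀ a b, P a b = - P b a)
    (hleib : ∀ a b c, P (a * b) c = a * P b c + b * P a c)
    (f g : MvPolynomial (Fin n) ℂ) :
    P f g = ∑ a, ∑ b, pderiv a f * pderiv b g * P (X a) (X b) := by
  classical
  have one : ∀ f g, P f g = ∑ a, pderiv a f * P (X a) g := by
    intro f g
    have h1 : P 1 g = 0 := by simpa using hleib 1 1 g
    induction f using MvPolynomial.induction_on with
    | C a =>
      have : (C a : MvPolynomial (Fin n) ℂ) = a • 1 := by rw [smul_eq_C_mul, mul_one]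
      rw [this, hsmul, h1]
      simp
    | add p q hp hq => simp [hadd, hp, hq, add_mul, Finset.sum_add_distrib]
    | mul_X p k hp =>
      rw [hleib, hp]
      simp only [Derivation.leibniz, smul_eq_mul, add_mul, Finset.sum_add_distrib, pderiv_X]
      congr 1
      · rw [Finset.sum_eq_single k]
        · simp
        · intro b _ hb
          simp [hb.symm]
        · simp
      · rw [Finset.mul_sum]
        exact Finset.sum_congr rfl fun i _ => by ring
  rw [one]
  refine Finset.sum_congr rfl fun a _ => ?_
  rw [hskew, one, ← Finset.sum_neg_distrib, Finset.mul_sum]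
  refine Finset.sum_congr rfl fun b _ => ?_
  rw [hskew (X a) (X b)]
  ring

/-! ### The order of the Jacobian determinant -/

/-- The order of the Jacobian determinant exceeds its expected value `∑ (ord φᵢ - 1)` at least by
the corank of the Jacobian matrix of the lowest degree terms. -/
lemma sum_mvOrd_add_corank_le {n : ℕ} (φ : Fin n → MvPolynomial (Fin n) ℂ)
    (hD : Matrix.det (Matrix.of fun i j : Fin n => pderiv j (φ i)) ≠ 0) :
    ∑ i, mvOrd (φ i) + (n - ((Matrix.of fun i j : Fin n => pderiv j (mvLow (φ i))).map
        (algebraMap (MvPolynomial (Fin n) ℂ)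
          (FractionRing (MvPolynomial (Fin n) ℂ)))).rank) ≤
      n + mvOrd (Matrix.det (Matrix.of fun i j : Fin n => pderiv j (φ i))) := by
  set J := Matrix.of fun i j : Fin n => pderiv j (φ i) with hJ
  set K := FractionRing (MvPolynomial (Fin n) ℂ)
  choose B hB hB0 using fun i j => exists_dilate_pderiv (φ i) j
  set Δ := Polynomial.mapRingHom (algebraMap (MvPolynomial (Fin n) ℂ) K) with hΔ
  have hdet : Polynomial.X ^ n * dilate J.det =
      Polynomial.X ^ (∑ i, mvOrd (φ i)) * (Matrix.of B).det := by
    have h1 := Matrix.det_mul_column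
      (fun i => (Polynomial.X : Polynomial (MvPolynomial (Fin n) ℂ)) ^ mvOrd (φ i)) (Matrix.of B)
    have h2 := Matrix.det_mul_column
      (fun _ : Fin n => (Polynomial.X : Polynomial (MvPolynomial (Fin n) ℂ)))
      (J.map (dilate (σ := Fin n)))
    rw [Finset.prod_pow_eq_pow_sum] at h1
    rw [← h1, AlgHom.map_det, AlgHom.mapMatrix_apply]
    rw [Finset.prod_const, Finset.card_univ, Fintype.card_fin] at h2
    rw [← h2]
    congr 1
    ext1 i j
    exact hB i j
  have hdvd := X_pow_dvd_det ((Matrix.of B).map Δ)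
  have hred : (((Matrix.of B).map Δ).map (Polynomial.coeff · 0)) =
      (Matrix.of fun i j : Fin n => pderiv j (mvLow (φ i))).map
        (algebraMap (MvPolynomial (Fin n) ℂ) K) := by
    ext1 i j
    simp [hΔ, hB0]
  rw [hred] at hdvd
  set s := ((Matrix.of fun i j : Fin n => pderiv j (mvLow (φ i))).map
        (algebraMap (MvPolynomial (Fin n) ℂ) K)).rank
  have hdvd2 : (Polynomial.X : Polynomial K) ^ (∑ i, mvOrd (φ i) + (n - s)) ∣
      Δ (Polynomial.X ^ n * dilate J.det) := by
    rw [hdet, map_mul, RingHom.map_det, RingHom.mapMatrix_apply, map_pow, pow_add]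
    refine mul_dvd_mul ?_ hdvd
    simp [hΔ]
  by_contra! hlt
  rw [Polynomial.X_pow_dvd_iff] at hdvd2
  have h3 := hdvd2 _ hlt
  rw [hΔ, Polynomial.coe_mapRingHom, Polynomial.coeff_map, add_comm, Polynomial.coeff_X_pow_mul,
    coeff_dilate] at h3
  exact mvLow_ne_zero hD (IsFractionRing.injective (MvPolynomial (Fin n) ℂ) K
    (by rw [mvLow, h3, map_zero]))

/-- From a matrix of rank at least `k` one can select `k` linearly independent rows. -/
lemma exists_finset_rows {K : Type*} [Field K] {m n : ℕ} (A : Matrix (Fin m) (Fin n) K) {k : ℕ}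
    (hk : k ≤ A.rank) :
    ∃ S : Finset (Fin m), S.card = k ∧ LinearIndependent K (fun i : S => A.row i.val) := by
  classical
  obtain ⟨κ, a, ha, hspan, hli⟩ := exists_linearIndependent' K A.row
  have : Fintype κ := Fintype.ofInjective a ha
  have hcard : Fintype.card κ = A.rank := by
    rw [Matrix.rank_eq_finrank_span_row, ← hspan, finrank_span_eq_card hli]
  obtain ⟨S, hS, hSk⟩ := Finset.exists_subset_card_eq
    (s := Finset.univ.image a) (n := k)
    (by rw [Finset.card_image_of_injective _ ha, Finset.card_univ, hcard]; exact hk)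
  refine ⟨S, hSk, ?_⟩
  have hch : ∀ i : S, ∃ c, a c = i.val := fun i => by
    simpa using hS i.2
  choose c hc using hch
  have hcinj : Function.Injective c := fun i j hij => Subtype.ext (by rw [← hc, ← hc, hij])
  have heq : (fun i : S => A.row i.val) = (A.row ∘ a) ∘ c := by
    ext1 i
    simp [hc]
  rw [heq]
  exact hli.comp c hcinj

/-- for a Poisson bracket `P` with linearization of rank `r`,
a log-canonical system `φ₁,…,φ_n` with Property I (i.e.
`2·(n + ord(D) − Σ ord(φ_i)) = r`) yields a polynomial integrable system:
the lowest degree terms pairwise commute for the linearized bracket `P₀`, and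
`n − r/2` of them are algebraically independent over `ℂ`. -/
theorem property_I_gives_integrable_system
    (n : ℕ)
    (P : MvPolynomial (Fin n) ℂ → MvPolynomial (Fin n) ℂ → MvPolynomial (Fin n) ℂ)
    (hadd : ∀ a b c, P (a + b) c = P a c + P b c)
    (hsmul : ∀ (r : ℂ) (a b), P (r • a) b = r • P a b)
    (hskew : ∀ a b, P a b = - P b a)
    (hleib : ∀ a b c, P (a * b) c = a * P b c + b * P a c)
    (hjacobi : ∀ f g h, P f (P g h) + P g (P h f) + P h (P f g) = 0)
    (hconst : ∀ i j, constantCoeff (P (X i) (X j)) = 0)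
    (r : ℕ)
    (hr : r = ((Matrix.of fun i j : Fin n =>
        homogeneousComponent 1 (P (X i) (X j))).map
          (algebraMap (MvPolynomial (Fin n) ℂ)
            (FractionRing (MvPolynomial (Fin n) ℂ)))).rank)
    (φ : Fin n → MvPolynomial (Fin n) ℂ) (hφ : ∀ i, φ i ≠ 0)
    (lam : Fin n → Fin n → ℂ)
    (hlam : ∀ i j, P (φ i) (φ j) = C (lam i j) * φ i * φ j)
    (hD : Matrix.det (Matrix.of fun i j : Fin n => pderiv j (φ i)) ≠ 0)
    (hPropI : 2 * ((n : ℤ)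
        + (mvOrd (Matrix.det (Matrix.of fun i j : Fin n => pderiv j (φ i))) : ℤ)
        - ∑ i : Fin n, (mvOrd (φ i) : ℤ)) = (r : ℤ)) :
    (∀ i j : Fin n,
      ∑ a : Fin n, ∑ b : Fin n,
        pderiv a (mvLow (φ i)) * pderiv b (mvLow (φ j)) *
          homogeneousComponent 1 (P (X a) (X b)) = 0) ∧
    ∃ S : Finset (Fin n), S.card = n - r / 2 ∧
      AlgebraicIndependent ℂ (fun i : S => mvLow (φ i.val)) := by
  classical
  refine ⟨fun i j => ?_, ?_⟩
  · choose B hB hB0 using fun i j => exists_dilate_pderiv (φ i) j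
    have hQ : ∀ a b, ∃ Q, dilate (P (X a) (X b)) = Polynomial.X * Q := by
      intro a b
      have : Polynomial.X ∣ dilate (P (X a) (X b)) := by
        rw [Polynomial.X_dvd_iff, coeff_dilate, homogeneousComponent_zero,
          ← constantCoeff_eq, hconst, C_0]
      exact this
    choose Q hQ using hQ
    have hQ0 : ∀ a b, (Q a b).coeff 0 = homogeneousComponent 1 (P (X a) (X b)) := by
      intro a b
      rw [← coeff_dilate, hQ, Polynomial.coeff_X_mul]
    obtain ⟨u, hu⟩ := X_pow_mvOrd_dvd_dilate (φ i)
    obtain ⟨v, hv⟩ := X_pow_mvOrd_dvd_dilate (φ j)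
    have h1 := congrArg (fun f => Polynomial.X ^ 2 * dilate f) (hlam i j)
    simp only [bracket_eq_sum P hadd hsmul hskew hleib (φ i) (φ j), map_sum, map_mul, hu, hv,
      Finset.mul_sum] at h1
    -- both sides are divisible by `t ^ (ord φᵢ + ord φⱼ + 1)`, and the quotient on the right
    -- is still divisible by `t`
    have h2 : Polynomial.X ^ (mvOrd (φ i) + mvOrd (φ j) + 1) *
          ∑ a, ∑ b, B i a * B j b * Q a b =
        Polynomial.X ^ (mvOrd (φ i) + mvOrd (φ j) + 1) *
          (Polynomial.X * (dilate (C (lam i j)) * u * v)) := by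
      rw [Finset.mul_sum]
      simp only [Finset.mul_sum]
      trans ∑ a, ∑ b, Polynomial.X ^ 2 *
        (dilate (pderiv a (φ i)) * dilate (pderiv b (φ j)) * dilate (P (X a) (X b)))
      · refine Finset.sum_congr rfl fun a _ => Finset.sum_congr rfl fun b _ => ?_
        rw [hQ]
        linear_combination (-(Polynomial.X * Q a b * Polynomial.X ^ mvOrd (φ j) * B j b)) * hB i a -
          (Polynomial.X * Q a b * Polynomial.X * dilate (pderiv a (φ i))) * hB j b
      · rw [h1]
        ring
    have h3 := congrArg (Polynomial.coeff · 0)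
      (mul_left_cancel₀ (pow_ne_zero _ Polynomial.X_ne_zero) h2)
    simpa [Polynomial.finsetSum_coeff, Polynomial.mul_coeff_zero, hB0, hQ0] using h3
  · have hle := sum_mvOrd_add_corank_le φ hD
    obtain ⟨S, hS, hli⟩ := exists_finset_rows
      ((Matrix.of fun i j : Fin n => pderiv j (mvLow (φ i))).map
        (algebraMap (MvPolynomial (Fin n) ℂ)
          (FractionRing (MvPolynomial (Fin n) ℂ)))) (k := n - r / 2) (by
            rw [← Nat.cast_sum] at hPropI
            omega)
    exact ⟨S, hS, algebraicIndependent_of_gradients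
      (K := FractionRing (MvPolynomial (Fin n) ℂ)) _ hli⟩
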